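/- arXiv:2410.08859 — 3 statements merged into one kernel-verified Lean document; each statement's English description precedes it below -/
import Mathlib

section
/- Let Z be a nonempty finite set and let φ: ℝ → ℝ ∪ {+∞} be an entropy function with recession slope φ'_∞ := lim_{x→∞} φ(x)/x. Then the associated divergence (ρ, σ) ↦ D_φ(ρ|σ) := Σ_{z: σ(z)>0} σ(z)·φ(ρ(z)/σ(z)) + φ'_∞ · Σ_{z: σ(z)=0} ρ(z) is jointly lower semicontinuous on the set of pairs of nonnegative functions ρ, σ: Z → ℝ≥0 (with the pointwise/product topology on (ℝ≥0)^Z × (ℝ≥0)^Z and values in ℝ ∪ {+∞}). -/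
open Filter Topology

noncomputable section

/-- `φ : ℝ → ℝ ∪ {+∞}` is an entropy function: lower semicontinuous, convex,
`dom(φ) ⊆ [0,∞)`, `dom(φ)\{0} ≠ ∅`, never taking the value `-∞`. -/
def IsEntropyFn (φ : ℝ → EReal) : Prop :=
  LowerSemicontinuous φ ∧
  (∀ x y a b : ℝ, 0 ≤ a → 0 ≤ b → a + b = 1 →
      φ (a * x + b * y) ≤ (a : EReal) * φ x + (b : EReal) * φ y) ∧
  (∀ x : ℝ, φ x ≠ ⊥) ∧
  (∀ x : ℝ, φ x < ⊤ → 0 ≤ x) ∧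
  (∃ x : ℝ, x ≠ 0 ∧ φ x < ⊤)

/-- The recession slope `φ'_∞ = lim_{x→∞} φ(x)/x`. -/
def recessionSlope (φ : ℝ → EReal) : EReal :=
  Filter.limsup (fun x : ℝ => φ x * ((x⁻¹ : ℝ) : EReal)) Filter.atTop

/-- The `φ`-divergence on a finite set `Z`. -/
def divergence {Z : Type*} [Fintype Z] (φ : ℝ → EReal) (ρ σ : Z → ℝ) : EReal :=
  (∑ z, if 0 < σ z then (σ z : EReal) * φ (ρ z / σ z) else 0)
    + recessionSlope φ * ((∑ z, if σ z = 0 then ρ z else 0 : ℝ) : EReal)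

/-!
On nonnegative arguments the divergence is a finite sum of perspectives `s φ(r/s)`, extended by
`φ'_∞ r` at `s = 0`, so it suffices that the perspective is lower semicontinuous and avoids `-∞`.
Where `s > 0` this is inherited from `φ`. At `s = 0`, every `t < φ'_∞` is the slope of an affine
minorant `t x + b ≤ φ(x)` on `[0, ∞)`: near infinity because `φ(x)/x → φ'_∞`, and on the remaining
compact interval because `φ` is bounded below there. Hence the perspective dominates the continuous
function `t r + b s`, whose value `t r` at `s = 0` is as close to `φ'_∞ r` as desired. The
chord inequality of convexity makes `φ'_∞` a genuine limit, different from `-∞`.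
-/

open Set

lemma mul_coe_finsetSum {ι : Type*} {S : Finset ι} (a : EReal) {g : ι → ℝ}
    (hg : ∀ i ∈ S, 0 ≤ g i) :
    a * ((∑ i ∈ S, g i : ℝ) : EReal) = ∑ i ∈ S, a * (g i : EReal) := by
  classical
  induction S using Finset.induction_on with
  | empty => simp
  | insert i S hi ih =>
    rw [Finset.forall_mem_insert] at hg
    rw [Finset.sum_insert hi, Finset.sum_insert hi, ← ih hg.2, EReal.coe_add]
    exact EReal.left_distrib_of_nonneg (EReal.coe_nonneg.2 hg.1)
      (EReal.coe_nonneg.2 (Finset.sum_nonneg hg.2))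

lemma coe_mul_ne_bot {a : ℝ} {x : EReal} (ha : 0 ≤ a) (hx : x ≠ ⊥) : (a : EReal) * x ≠ ⊥ := by
  simp [EReal.mul_ne_bot, ha, hx]

lemma coe_le_mul_coe_inv_iff {t x : ℝ} {a : EReal} (hx : 0 < x) :
    (t : EReal) ≤ a * ((x⁻¹ : ℝ) : EReal) ↔ ((t * x : ℝ) : EReal) ≤ a := by
  rw [EReal.coe_mul]
  exact EReal.le_div_iff_mul_le (EReal.coe_pos.2 hx) (EReal.coe_ne_top x)

lemma exists_coe_lt_and_lt_coe_mul {a : ℝ} {x y : EReal} (ha : 0 ≤ a) (hx : x ≠ ⊥)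
    (hy : y < (a : EReal) * x) : ∃ v : ℝ, (v : EReal) < x ∧ y < ((a * v : ℝ) : EReal) := by
  rcases ha.eq_or_lt with rfl | ha
  · obtain ⟨v, -, hv⟩ := EReal.lt_iff_exists_real_btwn.1 (bot_lt_iff_ne_bot.2 hx)
    exact ⟨v, hv, by simpa using hy⟩
  · have ha' : (0 : EReal) < a := EReal.coe_pos.2 ha
    rw [mul_comm, ← EReal.div_lt_iff ha' (EReal.coe_ne_top a)] at hy
    obtain ⟨v, hyv, hvx⟩ := EReal.lt_iff_exists_real_btwn.1 hy
    rw [EReal.div_lt_iff ha' (EReal.coe_ne_top a), mul_comm, ← EReal.coe_mul] at hyv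
    exact ⟨v, hvx, hyv⟩

section

variable {X : Type*} [TopologicalSpace X]

lemma lowerSemicontinuousOn_finsetSum_of_ne_bot {ι : Type*} {A : Set X} {S : Finset ι}
    {f : ι → X → EReal} (hf : ∀ i ∈ S, LowerSemicontinuousOn (f i) A)
    (hbot : ∀ i ∈ S, ∀ x ∈ A, f i x ≠ ⊥) :
    LowerSemicontinuousOn (fun x => ∑ i ∈ S, f i x) A := by
  classical
  induction S using Finset.induction_on with
  | empty => simpa using lowerSemicontinuousOn_const
  | insert i S hi ih =>
    rw [Finset.forall_mem_insert] at hf hbot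
    simp only [Finset.sum_insert hi]
    refine hf.1.add' (ih hf.2 hbot.2) fun x hx => ?_
    have hsum : ∑ j ∈ S, f j x ≠ ⊥ := fun h =>
      let ⟨j, hj, hjx⟩ := WithBot.sum_eq_bot_iff.1 h
      hbot.2 j hj x hx hjx
    exact EReal.continuousAt_add (Or.inr hsum) (Or.inl (hbot.1 x hx))

lemma exists_coe_le_of_lowerSemicontinuousOn_of_isCompact {K : Set X} {f : X → EReal}
    (hf : LowerSemicontinuousOn f K) (hK : IsCompact K) (hbot : ∀ x ∈ K, f x ≠ ⊥) :
    ∃ m : ℝ, ∀ x ∈ K, (m : EReal) ≤ f x := by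
  rcases K.eq_empty_or_nonempty with rfl | hne
  · exact ⟨0, by simp⟩
  · obtain ⟨y, hyK, hmin⟩ := hf.exists_isMinOn hne hK
    obtain ⟨m, -, hm⟩ := EReal.lt_iff_exists_real_btwn.1 (bot_lt_iff_ne_bot.2 (hbot y hyK))
    exact ⟨m, fun x hx => hm.le.trans (hmin hx)⟩

end

variable {φ : ℝ → EReal}

section RecessionSlope

lemma eventually_affine_le_affine {s t : ℝ} (hst : s < t) (c d : ℝ) :
    ∀ᶠ x : ℝ in atTop, s * x + c ≤ t * x + d := by
  filter_upwards [eventually_ge_atTop ((c - d) / (t - s))] with x hx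
  rw [div_le_iff₀ (sub_pos.2 hst)] at hx
  linarith

variable {x₀ x₁ c s t : ℝ}

/-- If `φ` dropped below the line through `(x₀, c)` at some `x > x₁`, then so would the chord from
`(x₀, c)` to `(x, φ x)` at `x₁`. -/
lemma line_le_of_line_le_of_convex
    (hconv : ∀ x y a b : ℝ, 0 ≤ a → 0 ≤ b → a + b = 1 →
      φ (a * x + b * y) ≤ (a : EReal) * φ x + (b : EReal) * φ y)
    (h₀ : φ x₀ ≤ c) (h₀₁ : x₀ < x₁) (h₁ : ((c + t * (x₁ - x₀) : ℝ) : EReal) ≤ φ x₁)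
    {x : ℝ} (hx : x₁ ≤ x) : ((c + t * (x - x₀) : ℝ) : EReal) ≤ φ x := by
  by_contra! hlt
  obtain ⟨v, hφv, hvlt⟩ := EReal.lt_iff_exists_real_btwn.1 hlt
  rw [EReal.coe_lt_coe_iff] at hvlt
  have hd : 0 < x - x₀ := by linarith
  set a := (x - x₁) / (x - x₀) with ha
  set b := (x₁ - x₀) / (x - x₀) with hb
  have ha0 : 0 ≤ a := div_nonneg (by linarith) hd.le
  have hb0 : 0 < b := div_pos (by linarith) hd
  have hab : a + b = 1 := by rw [ha, hb]; field_simp; ring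
  have hbd : b * (x - x₀) = x₁ - x₀ := div_mul_cancel₀ _ hd.ne'
  have hx₁ : a * x₀ + b * x = x₁ := by linear_combination x₀ * hab + hbd
  have hchord : ((c + t * (x₁ - x₀) : ℝ) : EReal) ≤ ((a * c + b * v : ℝ) : EReal) := by
    calc ((c + t * (x₁ - x₀) : ℝ) : EReal) ≤ φ (a * x₀ + b * x) := by rwa [hx₁]
      _ ≤ (a : EReal) * φ x₀ + (b : EReal) * φ x := hconv x₀ x a b ha0 hb0.le hab
      _ ≤ (a : EReal) * c + (b : EReal) * v :=
        add_le_add (mul_le_mul_of_nonneg_left h₀ (EReal.coe_nonneg.2 ha0))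
          (mul_le_mul_of_nonneg_left hφv.le (EReal.coe_nonneg.2 hb0.le))
      _ = ((a * c + b * v : ℝ) : EReal) := by norm_cast
  have hstrict : a * c + b * v < c + t * (x₁ - x₀) := by
    calc a * c + b * v < a * c + b * (c + t * (x - x₀)) := by gcongr
      _ = c + t * (x₁ - x₀) := by linear_combination c * hab + t * hbd
  exact (EReal.coe_le_coe_iff.1 hchord).not_gt hstrict

lemma eventually_linear_le_of_line_le_of_convex
    (hconv : ∀ x y a b : ℝ, 0 ≤ a → 0 ≤ b → a + b = 1 →
      φ (a * x + b * y) ≤ (a : EReal) * φ x + (b : EReal) * φ y)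
    (h₀ : φ x₀ ≤ c) (h₀₁ : x₀ < x₁) (h₁ : ((c + t * (x₁ - x₀) : ℝ) : EReal) ≤ φ x₁)
    (hst : s < t) : ∀ᶠ x : ℝ in atTop, ((s * x : ℝ) : EReal) ≤ φ x := by
  filter_upwards [eventually_ge_atTop x₁, eventually_affine_le_affine hst 0 (c - t * x₀)]
    with x hx hsx
  refine le_trans ?_ (line_le_of_line_le_of_convex hconv h₀ h₀₁ h₁ hx)
  rw [EReal.coe_le_coe_iff]
  linarith

lemma frequently_linear_le_of_lt_recessionSlope (ht : (t : EReal) < recessionSlope φ) :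
    ∃ᶠ x : ℝ in atTop, ((t * x : ℝ) : EReal) ≤ φ x := by
  have hfreq : ∃ᶠ x : ℝ in atTop, (t : EReal) < φ x * ((x⁻¹ : ℝ) : EReal) :=
    frequently_lt_of_lt_limsup (by isBoundedDefault) ht
  exact (hfreq.and_eventually (eventually_gt_atTop 0)).mono fun x hx =>
    (coe_le_mul_coe_inv_iff hx.2).1 hx.1.le

lemma le_liminf_slope_of_eventually_linear_le
    (h : ∀ᶠ x : ℝ in atTop, ((t * x : ℝ) : EReal) ≤ φ x) :
    (t : EReal) ≤ liminf (fun x : ℝ => φ x * ((x⁻¹ : ℝ) : EReal)) atTop := by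
  refine le_liminf_of_le (by isBoundedDefault) ?_
  filter_upwards [h, eventually_gt_atTop 0] with x htx hx
  exact (coe_le_mul_coe_inv_iff hx).2 htx

end RecessionSlope

namespace IsEntropyFn

lemma exists_le_coe (hφ : IsEntropyFn φ) : ∃ x c : ℝ, φ x ≤ c := by
  obtain ⟨-, -, -, -, x, -, hx⟩ := hφ
  obtain ⟨c, hc, -⟩ := EReal.lt_iff_exists_real_btwn.1 hx
  exact ⟨x, c, hc.le⟩

lemma eventually_linear_le (hφ : IsEntropyFn φ) {t : ℝ} (ht : (t : EReal) < recessionSlope φ) :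
    ∀ᶠ x : ℝ in atTop, ((t * x : ℝ) : EReal) ≤ φ x := by
  obtain ⟨x₀, c, h₀⟩ := hφ.exists_le_coe
  obtain ⟨t₂, htt₂, ht₂⟩ := EReal.lt_iff_exists_real_btwn.1 ht
  obtain ⟨t₁, htt₁, ht₁₂⟩ := exists_between (EReal.coe_lt_coe_iff.1 htt₂)
  obtain ⟨x₁, hx₁, h₀₁, hline⟩ := ((frequently_linear_le_of_lt_recessionSlope ht₂).and_eventually
    ((eventually_gt_atTop x₀).and (eventually_affine_le_affine ht₁₂ (c - t₁ * x₀) 0))).exists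
  refine eventually_linear_le_of_line_le_of_convex hφ.2.1 h₀ h₀₁ (le_trans ?_ hx₁) htt₁
  rw [EReal.coe_le_coe_iff]
  linarith

lemma tendsto_recessionSlope (hφ : IsEntropyFn φ) :
    Tendsto (fun x : ℝ => φ x * ((x⁻¹ : ℝ) : EReal)) atTop (𝓝 (recessionSlope φ)) :=
  tendsto_of_le_liminf_of_limsup_le
    (EReal.ge_of_forall_gt_iff_ge.1 fun _ ht =>
      le_liminf_slope_of_eventually_linear_le (hφ.eventually_linear_le ht))
    le_rfl

lemma recessionSlope_ne_bot (hφ : IsEntropyFn φ) : recessionSlope φ ≠ ⊥ := by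
  obtain ⟨x₀, c, h₀⟩ := hφ.exists_le_coe
  obtain ⟨m, -, hm⟩ := EReal.lt_iff_exists_real_btwn.1 (bot_lt_iff_ne_bot.2 (hφ.2.2.1 (x₀ + 1)))
  have hline : ((c + (m - c) * (x₀ + 1 - x₀) : ℝ) : EReal) ≤ φ (x₀ + 1) := by
    convert hm.le using 2
    ring
  have hle : ((m - c - 1 : ℝ) : EReal) ≤ recessionSlope φ :=
    (le_liminf_slope_of_eventually_linear_le <| eventually_linear_le_of_line_le_of_convex
      hφ.2.1 h₀ (lt_add_one x₀) hline (sub_one_lt (m - c))).trans liminf_le_limsup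
  exact ((EReal.bot_lt_coe _).trans_le hle).ne'

end IsEntropyFn

lemma exists_affine_le_of_eventually_linear_le (hlsc : LowerSemicontinuousOn φ (Ici 0))
    (hbot : ∀ x, 0 ≤ x → φ x ≠ ⊥) {t : ℝ} (h : ∀ᶠ x : ℝ in atTop, ((t * x : ℝ) : EReal) ≤ φ x) :
    ∃ b : ℝ, ∀ x, 0 ≤ x → ((t * x + b : ℝ) : EReal) ≤ φ x := by
  obtain ⟨M, hM⟩ := eventually_atTop.1 h
  obtain ⟨m, hm⟩ := exists_coe_le_of_lowerSemicontinuousOn_of_isCompact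
    (hlsc.mono Icc_subset_Ici_self) (isCompact_Icc (b := M)) fun x hx => hbot x hx.1
  refine ⟨min 0 (m - |t| * M), fun x hx => ?_⟩
  rcases le_total M x with hMx | hxM
  · refine le_trans ?_ (hM x hMx)
    rw [EReal.coe_le_coe_iff]
    linarith [min_le_left 0 (m - |t| * M)]
  · refine le_trans ?_ (hm x ⟨hx, hxM⟩)
    have htx : t * x ≤ |t| * M := by
      calc t * x ≤ |t| * x := mul_le_mul_of_nonneg_right (le_abs_self t) hx
        _ ≤ |t| * M := mul_le_mul_of_nonneg_left hxM (abs_nonneg t)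
    rw [EReal.coe_le_coe_iff]
    linarith [min_le_right 0 (m - |t| * M)]

lemma exists_affine_le_of_lt_recessionSlope (hlsc : LowerSemicontinuousOn φ (Ici 0))
    (hbot : ∀ x, 0 ≤ x → φ x ≠ ⊥)
    (hslope : Tendsto (fun x : ℝ => φ x * ((x⁻¹ : ℝ) : EReal)) atTop (𝓝 (recessionSlope φ)))
    {t : ℝ} (ht : (t : EReal) < recessionSlope φ) :
    ∃ b : ℝ, ∀ x, 0 ≤ x → ((t * x + b : ℝ) : EReal) ≤ φ x := by
  refine exists_affine_le_of_eventually_linear_le hlsc hbot ?_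
  filter_upwards [hslope.eventually_const_lt ht, eventually_gt_atTop 0] with x htx hx
  exact (coe_le_mul_coe_inv_iff hx).1 htx.le

/-- The perspective `s φ(r/s)` of `φ`, extended to `s = 0` by the recession function `φ'_∞ r`: the
contribution of a single point to the divergence. Values at `s < 0` are junk. -/
def perspective (φ : ℝ → EReal) (r s : ℝ) : EReal :=
  if 0 < s then (s : EReal) * φ (r / s) else (r : EReal) * recessionSlope φ

lemma perspective_of_pos (r : ℝ) {s : ℝ} (hs : 0 < s) :
    perspective φ r s = (s : EReal) * φ (r / s) :=
  if_pos hs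

lemma perspective_zero_right (r : ℝ) : perspective φ r 0 = (r : EReal) * recessionSlope φ :=
  if_neg (lt_irrefl 0)

lemma divergence_eq_sum_perspective {Z : Type*} [Fintype Z] {ρ σ : Z → ℝ} (hρ : ∀ z, 0 ≤ ρ z)
    (hσ : ∀ z, 0 ≤ σ z) : divergence φ ρ σ = ∑ z, perspective φ (ρ z) (σ z) := by
  rw [divergence, mul_coe_finsetSum, ← Finset.sum_add_distrib]
  · refine Finset.sum_congr rfl fun z _ => ?_
    rcases (hσ z).eq_or_lt with hz | hz
    · simp [← hz, perspective_zero_right, mul_comm]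
    · simp [hz, hz.ne', perspective_of_pos]
  · intro z _
    split_ifs
    exacts [hρ z, le_rfl]

lemma perspective_ne_bot (hbot : ∀ x, 0 ≤ x → φ x ≠ ⊥) (hslope_bot : recessionSlope φ ≠ ⊥)
    {r s : ℝ} (hr : 0 ≤ r) (hs : 0 ≤ s) : perspective φ r s ≠ ⊥ := by
  rcases hs.eq_or_lt with rfl | hs
  · rw [perspective_zero_right]
    exact coe_mul_ne_bot hr hslope_bot
  · rw [perspective_of_pos r hs]
    exact coe_mul_ne_bot hs.le (hbot _ (div_nonneg hr hs.le))

lemma linear_le_perspective {t b : ℝ} (ht : (t : EReal) ≤ recessionSlope φ)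
    (hb : ∀ x, 0 ≤ x → ((t * x + b : ℝ) : EReal) ≤ φ x) {r s : ℝ} (hr : 0 ≤ r) (hs : 0 ≤ s) :
    ((t * r + b * s : ℝ) : EReal) ≤ perspective φ r s := by
  rcases hs.eq_or_lt with rfl | hs
  · rw [perspective_zero_right, mul_zero, add_zero, mul_comm, EReal.coe_mul]
    exact mul_le_mul_of_nonneg_left ht (EReal.coe_nonneg.2 hr)
  · have hhom : t * r + b * s = s * (t * (r / s) + b) := by field_simp
    rw [perspective_of_pos r hs, hhom, EReal.coe_mul]
    exact mul_le_mul_of_nonneg_left (hb _ (div_nonneg hr hs.le)) (EReal.coe_nonneg.2 hs.le)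

lemma lowerSemicontinuousWithinAt_perspective_of_pos (hlsc : LowerSemicontinuousOn φ (Ici 0))
    (hbot : ∀ x, 0 ≤ x → φ x ≠ ⊥) {r s : ℝ} (hr : 0 ≤ r) (hs : 0 < s) :
    LowerSemicontinuousWithinAt (fun p : ℝ × ℝ => perspective φ p.1 p.2) (Ici 0) (r, s) := by
  intro y hy
  have hrs : 0 ≤ r / s := div_nonneg hr hs.le
  simp only [perspective_of_pos r hs] at hy
  obtain ⟨v, hv, hyv⟩ := exists_coe_lt_and_lt_coe_mul hs.le (hbot _ hrs) hy
  have hquot : Tendsto (fun p : ℝ × ℝ => p.1 / p.2) (𝓝[Ici 0] (r, s)) (𝓝[Ici 0] (r / s)) :=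
    ((continuousAt_fst.div continuousAt_snd hs.ne').continuousWithinAt).tendsto_nhdsWithin
      fun p hp => div_nonneg hp.1 hp.2
  have hcont : Continuous fun p : ℝ × ℝ => ((p.2 * v : ℝ) : EReal) :=
    continuous_coe_real_ereal.comp (by fun_prop)
  filter_upwards [hquot.eventually (hlsc _ hrs v hv),
    hcont.continuousWithinAt.eventually_const_lt hyv,
    continuous_snd.continuousWithinAt.eventually_const_lt hs] with p hvp hyp hp
  rw [perspective_of_pos p.1 hp]
  refine hyp.trans_le ?_
  rw [EReal.coe_mul]
  exact mul_le_mul_of_nonneg_left hvp.le (EReal.coe_nonneg.2 hp.le)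

lemma lowerSemicontinuousWithinAt_perspective_zero_right
    (hlsc : LowerSemicontinuousOn φ (Ici 0)) (hbot : ∀ x, 0 ≤ x → φ x ≠ ⊥)
    (hslope : Tendsto (fun x : ℝ => φ x * ((x⁻¹ : ℝ) : EReal)) atTop (𝓝 (recessionSlope φ)))
    (hslope_bot : recessionSlope φ ≠ ⊥) {r : ℝ} (hr : 0 ≤ r) :
    LowerSemicontinuousWithinAt (fun p : ℝ × ℝ => perspective φ p.1 p.2) (Ici 0) (r, 0) := by
  intro y hy
  simp only [perspective_zero_right] at hy
  obtain ⟨t, ht, hyt⟩ := exists_coe_lt_and_lt_coe_mul hr hslope_bot hy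
  obtain ⟨b, hb⟩ := exists_affine_le_of_lt_recessionSlope hlsc hbot hslope ht
  have hcont : Continuous fun p : ℝ × ℝ => ((t * p.1 + b * p.2 : ℝ) : EReal) :=
    continuous_coe_real_ereal.comp (by fun_prop)
  have hyt' : y < ((t * r + b * 0 : ℝ) : EReal) := by
    rwa [mul_zero, add_zero, mul_comm]
  filter_upwards [hcont.continuousWithinAt.eventually_const_lt hyt', self_mem_nhdsWithin]
    with p hyp hp
  exact hyp.trans_le (linear_le_perspective ht.le hb hp.1 hp.2)

lemma lowerSemicontinuousOn_perspective (hlsc : LowerSemicontinuousOn φ (Ici 0))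
    (hbot : ∀ x, 0 ≤ x → φ x ≠ ⊥)
    (hslope : Tendsto (fun x : ℝ => φ x * ((x⁻¹ : ℝ) : EReal)) atTop (𝓝 (recessionSlope φ)))
    (hslope_bot : recessionSlope φ ≠ ⊥) :
    LowerSemicontinuousOn (fun p : ℝ × ℝ => perspective φ p.1 p.2) (Ici 0) := by
  rintro ⟨r, s⟩ ⟨hr, hs⟩
  rcases hs.eq_or_lt with rfl | hs
  · exact lowerSemicontinuousWithinAt_perspective_zero_right hlsc hbot hslope hslope_bot hr
  · exact lowerSemicontinuousWithinAt_perspective_of_pos hlsc hbot hr hs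

theorem divergence_jointly_lsc_general {Z : Type*} [Fintype Z]
    (hlsc : LowerSemicontinuousOn φ (Ici 0)) (hbot : ∀ x, 0 ≤ x → φ x ≠ ⊥)
    (hslope : Tendsto (fun x : ℝ => φ x * ((x⁻¹ : ℝ) : EReal)) atTop (𝓝 (recessionSlope φ)))
    (hslope_bot : recessionSlope φ ≠ ⊥) :
    LowerSemicontinuousOn
      (fun p : (Z → ℝ) × (Z → ℝ) => divergence φ p.1 p.2)
      {p : (Z → ℝ) × (Z → ℝ) | (∀ z, 0 ≤ p.1 z) ∧ ∀ z, 0 ≤ p.2 z} := by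
  have hsum : LowerSemicontinuousOn
      (fun p : (Z → ℝ) × (Z → ℝ) => ∑ z, perspective φ (p.1 z) (p.2 z))
      {p : (Z → ℝ) × (Z → ℝ) | (∀ z, 0 ≤ p.1 z) ∧ ∀ z, 0 ≤ p.2 z} :=
    lowerSemicontinuousOn_finsetSum_of_ne_bot
      (fun z _ => (lowerSemicontinuousOn_perspective hlsc hbot hslope hslope_bot).comp
        (g := fun p : (Z → ℝ) × (Z → ℝ) => (p.1 z, p.2 z)) (by fun_prop)
        fun _ hp => ⟨hp.1 z, hp.2 z⟩)
      (fun z _ _ hp => perspective_ne_bot hbot hslope_bot (hp.1 z) (hp.2 z))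
  intro p hp
  refine LowerSemicontinuousWithinAt.congr_of_eventuallyEq (hsum p hp) hp ?_
  filter_upwards [self_mem_nhdsWithin] with q hq
  exact (divergence_eq_sum_perspective hq.1 hq.2).symm

/-- for an entropy function `φ` on a nonempty finite set `Z`, the
divergence `(ρ, σ) ↦ D_φ(ρ|σ)` is jointly lower semicontinuous on the set of pairs
of nonnegative functions (with the product topology). -/
theorem divergence_jointly_lsc {Z : Type*} [Fintype Z] [Nonempty Z]
    (φ : ℝ → EReal) (hφ : IsEntropyFn φ) :
    LowerSemicontinuousOn
      (fun p : (Z → ℝ) × (Z → ℝ) => divergence φ p.1 p.2)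
      {p : (Z → ℝ) × (Z → ℝ) | (∀ z, 0 ≤ p.1 z) ∧ ∀ z, 0 ≤ p.2 z} :=
  divergence_jointly_lsc_general (hφ.1.lowerSemicontinuousOn _) (fun x _ => hφ.2.2.1 x)
    hφ.tendsto_recessionSlope hφ.recessionSlope_ne_bot

end
end

section
/- Let X_J and Y be nonempty finite sets, μ_J: X_J → ℝ and ν: Y → ℝ strictly positive weight functions, c: X_J × Y → ℝ a cost function, ε > 0, φ₁, φ₂ entropy functions satisfying Assumption A (nonnegative, finite on [0,∞), continuously differentiable on the interior of their domain) with divergences D₁ = D_{φ₁}, D₂ = D_{φ₂}, and ν_{-J}: Y → ℝ≥0 a nonnegative function. Then the unbalanced cell subproblem min over nonnegative plans π: X_J × Y → ℝ≥0 of E_J(π|ν_{-J}) := Σ_{x,y} c(x,y)π(x,y) + ε·KL(π | μ_J ⊗ ν) + D₁(P_X π | μ_J) + D₂(P_Y π + ν_{-J} | ν) has a finite infimum, and this infimum is attained by a unique minimizer π_J. -/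
open Filter Topology
open scoped Classical

noncomputable section

/-- The convex conjugate `φ*(z) = sup_{x ∈ ℝ} (z·x − φ(x))`. -/
def conjFn (φ : ℝ → EReal) (z : ℝ) : EReal :=
  ⨆ x : ℝ, (((z * x : ℝ) : EReal) - φ x)

/-- Kullback–Leibler divergence on a finite set, with `0·log 0 = 0`:
`KL(ρ|σ) = ∑ z (ρ z log(ρ z/σ z) − ρ z + σ z)` if `ρ ≪ σ`, else `+∞`. -/
def KLfin {Z : Type*} [Fintype Z] (ρ σ : Z → ℝ) : EReal :=
  if ∀ z, σ z = 0 → ρ z = 0 then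
    ((∑ z, (ρ z * Real.log (ρ z / σ z) - ρ z + σ z) : ℝ) : EReal)
  else ⊤

/-- Assumption A: the entropy function `φ` is nonnegative, finite on `[0,∞)`,
and continuously differentiable on the interior `(0,∞)` of its domain. -/
def AssumptionA (φ : ℝ → EReal) : Prop :=
  IsEntropyFn φ ∧ (∀ x : ℝ, 0 ≤ φ x) ∧ (∀ x : ℝ, 0 ≤ x → φ x ≠ ⊤) ∧
  ContDiffOn ℝ 1 (fun s : ℝ => (φ s).toReal) (Set.Ioi (0 : ℝ))

/-- Primal objective of the unbalanced (cell) problem with `Y`-submarginal `νm`: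
`E_J(π|νm) = ⟨c, π⟩ + ε KL(π | μ⊗ν) + D_{φ₁}(P_X π | μ) + D_{φ₂}(P_Y π + νm | ν)`. -/
def EJfun {W Y : Type*} [Fintype W] [Fintype Y]
    (c : W → Y → ℝ) (ε : ℝ) (φ₁ φ₂ : ℝ → EReal)
    (μ : W → ℝ) (ν : Y → ℝ) (νm : Y → ℝ) (π : W → Y → ℝ) : EReal :=
  ((∑ x, ∑ y, c x y * π x y : ℝ) : EReal)
    + (ε : EReal) * KLfin (fun p : W × Y => π p.1 p.2) (fun p : W × Y => μ p.1 * ν p.2)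
    + divergence φ₁ (fun x => ∑ y, π x y) μ
    + divergence φ₂ (fun y => (∑ x, π x y) + νm y) ν

/-- Dual objective of the unbalanced (cell) problem with `Y`-submarginal `νm`. -/
def DJfun {W Y : Type*} [Fintype W] [Fintype Y]
    (c : W → Y → ℝ) (ε : ℝ) (φ₁ φ₂ : ℝ → EReal)
    (μ : W → ℝ) (ν : Y → ℝ) (νm : Y → ℝ) (α : W → ℝ) (β : Y → ℝ) : EReal :=
  ((ε * ∑ x, ∑ y, (1 - Real.exp ((α x + β y - c x y) / ε)) * (μ x * ν y) : ℝ) : EReal)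
    - (∑ x, (μ x : EReal) * conjFn φ₁ (-(α x)))
    - (∑ y, (ν y : EReal) * conjFn φ₂ (-(β y)))
    - ((∑ y, β y * νm y : ℝ) : EReal)

/-- The `Y`-submarginal `ν_{-J}` of the plan `π` outside the cell `J`:
`ν_{-J}(y) = ∑_{x ∉ J} π(x,y)`. -/
def outMarg {X Y : Type*} [Fintype X] (J : Set X) (π : X → Y → ℝ) : Y → ℝ :=
  fun y => ∑ x, (Jᶜ).indicator (fun x' => π x' y) x

/-- The global unbalanced objective
`E(π) = ⟨c, π⟩ + ε KL(π|μ⊗ν) + D_{φ₁}(P_X π|μ) + D_{φ₂}(P_Y π|ν)`. -/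
def Eglobal {X Y : Type*} [Fintype X] [Fintype Y]
    (c : X → Y → ℝ) (ε : ℝ) (φ₁ φ₂ : ℝ → EReal)
    (μ : X → ℝ) (ν : Y → ℝ) (π : X → Y → ℝ) : EReal :=
  EJfun c ε φ₁ φ₂ μ ν (fun _ => 0) π

/-!
On nonnegative plans the entropic transport cost is strictly convex, and by the Fenchel–Young
inequality it outgrows every multiple of the total mass. The marginal penalties are convex and lower
semicontinuous, and since a convex function of one real variable has an affine minorant, they are
bounded below by an affine function of the total mass. Hence the objective is lower semicontinuous,
coercive and strictly convex on its domain, and the direct method gives a unique minimizer.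
-/

lemma exists_isMinOn_of_eventually_cocompact_le {α β : Type*} [TopologicalSpace α] [LinearOrder β]
    {f : α → β} {s : Set α} {x₀ : α} (hf : LowerSemicontinuousOn f s) (hs : IsClosed s)
    (hx₀ : x₀ ∈ s) (hc : ∀ᶠ x in cocompact α ⊓ 𝓟 s, f x₀ ≤ f x) :
    ∃ x ∈ s, IsMinOn f s x := by
  obtain ⟨K, hK, hKf⟩ := (hasBasis_cocompact.inf_principal _).eventually_iff.1 hc
  have hsub : insert x₀ (K ∩ s) ⊆ s := Set.insert_subset hx₀ Set.inter_subset_right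
  obtain ⟨x, hx, hmin⟩ := (hf.mono hsub).exists_isMinOn (Set.insert_nonempty _ _)
    ((hK.inter_right hs).insert x₀)
  refine ⟨x, hsub hx, fun y hy => ?_⟩
  by_cases hyK : y ∈ K
  · exact hmin (Set.mem_insert_of_mem _ ⟨hyK, hy⟩)
  · exact (hmin (Set.mem_insert _ _)).trans (hKf ⟨hyK, hy⟩)

lemma exists_affine_le_of_convexOn {D : Set ℝ} {f : ℝ → ℝ} (hf : ConvexOn ℝ D f) :
    ∃ a b : ℝ, ∀ x ∈ D, a * x + b ≤ f x := by
  by_cases hD : D.Nontrivial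
  · obtain ⟨x₀, hx₀, x₁, hx₁, hlt⟩ := hD.exists_lt
    obtain ⟨m, hm₀, hm₁⟩ := exists_between hlt
    have hm : m ∈ interior D :=
      interior_mono (hf.1.ordConnected.out hx₀ hx₁) (by rw [interior_Icc]; exact ⟨hm₀, hm₁⟩)
    set a := derivWithin f (Set.Ioi m) m
    refine ⟨a, f m - a * m, fun x hx => ?_⟩
    rcases lt_trichotomy x m with hxm | rfl | hmx
    · have hslope : slope f x m ≤ a :=
        (hf.slope_le_leftDeriv_of_mem_interior hx hm hxm).trans
          (hf.leftDeriv_le_rightDeriv_of_mem_interior hm)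
      rw [slope_def_field, div_le_iff₀ (sub_pos.2 hxm)] at hslope
      linarith
    · linarith
    · have hslope : a ≤ slope f m x := hf.rightDeriv_le_slope_of_mem_interior hm hx hmx
      rw [slope_def_field, le_div_iff₀ (sub_pos.2 hmx)] at hslope
      linarith
  · rcases (Set.not_nontrivial_iff.1 hD).eq_empty_or_singleton with rfl | ⟨x₀, rfl⟩
    · exact ⟨0, 0, fun x hx => hx.elim⟩
    · exact ⟨0, f x₀, fun x hx => by rw [Set.mem_singleton_iff.1 hx]; simp⟩

lemma strictConvexOn_sum_pi {ι : Type*} [Fintype ι] {E : ι → Type*} [∀ i, AddCommGroup (E i)]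
    [∀ i, Module ℝ (E i)] {s : ∀ i, Set (E i)} {f : ∀ i, E i → ℝ}
    (hf : ∀ i, StrictConvexOn ℝ (s i) (f i)) :
    StrictConvexOn ℝ (Set.univ.pi s) fun x => ∑ i, f i (x i) := by
  refine ⟨convex_pi fun i _ => (hf i).1, fun x hx y hy hxy a b ha hb hab => ?_⟩
  obtain ⟨j, hj⟩ := Function.ne_iff.1 hxy
  have hle (i : ι) : f i (a • x i + b • y i) ≤ a * f i (x i) + b * f i (y i) :=
    (hf i).convexOn.2 (hx i trivial) (hy i trivial) ha.le hb.le hab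
  have hlt : f j (a • x j + b • y j) < a * f j (x j) + b * f j (y j) :=
    (hf j).2 (hx j trivial) (hy j trivial) hj ha hb hab
  simpa only [smul_eq_mul, Pi.add_apply, Pi.smul_apply, Finset.sum_add_distrib,
    ← Finset.mul_sum] using
    Finset.sum_lt_sum (fun i _ => hle i) ⟨j, Finset.mem_univ j, hlt⟩

lemma coe_real_ereal_sum {ι : Type*} (s : Finset ι) (f : ι → ℝ) :
    ((∑ i ∈ s, f i : ℝ) : EReal) = ∑ i ∈ s, (f i : EReal) :=
  map_sum (⟨⟨Real.toEReal, EReal.coe_zero⟩, EReal.coe_add⟩ : ℝ →+ EReal) f s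

/-- A closed convex function with values in `ℝ ∪ {+∞}`, as in convex analysis. The value `+∞`
everywhere is allowed, and `0 * ⊤ = 0` in the convexity inequality. -/
structure IsClosedConvexFn {E : Type*} [AddCommGroup E] [Module ℝ E] [TopologicalSpace E]
    (f : E → EReal) : Prop where
  lowerSemicontinuous : LowerSemicontinuous f
  convex : ∀ (x y : E) (a b : ℝ), 0 ≤ a → 0 ≤ b → a + b = 1 →
    f (a • x + b • y) ≤ (a : EReal) * f x + (b : EReal) * f y
  ne_bot : ∀ x, f x ≠ ⊥

lemma IsEntropyFn.isClosedConvexFn {φ : ℝ → EReal} (hφ : IsEntropyFn φ) : IsClosedConvexFn φ :=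
  ⟨hφ.1, hφ.2.1, hφ.2.2.1⟩

namespace IsClosedConvexFn

variable {E F : Type*} [AddCommGroup E] [Module ℝ E] [TopologicalSpace E]
  [AddCommGroup F] [Module ℝ F] [TopologicalSpace F] {f g : E → EReal}

lemma zero : IsClosedConvexFn fun _ : E => (0 : EReal) :=
  ⟨lowerSemicontinuous_const, by simp, by simp⟩

lemma add (hf : IsClosedConvexFn f) (hg : IsClosedConvexFn g) :
    IsClosedConvexFn fun x => f x + g x where
  lowerSemicontinuous := hf.lowerSemicontinuous.add' hg.lowerSemicontinuous fun x =>
    EReal.continuousAt_add (.inr (hg.ne_bot x)) (.inl (hf.ne_bot x))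
  convex x y a b ha hb hab := by
    rw [EReal.left_distrib_of_nonneg_of_ne_top (EReal.coe_nonneg.2 ha) (EReal.coe_ne_top a),
      EReal.left_distrib_of_nonneg_of_ne_top (EReal.coe_nonneg.2 hb) (EReal.coe_ne_top b),
      add_add_add_comm]
    exact add_le_add (hf.convex x y a b ha hb hab) (hg.convex x y a b ha hb hab)
  ne_bot x := EReal.add_ne_bot_iff.2 ⟨hf.ne_bot x, hg.ne_bot x⟩

lemma const_mul (hf : IsClosedConvexFn f) {m : ℝ} (hm : 0 ≤ m) :
    IsClosedConvexFn fun x => (m : EReal) * f x where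
  lowerSemicontinuous := by
    have hcont : Continuous fun z : EReal => (m : EReal) * z :=
      continuous_iff_continuousAt.2 fun z =>
        EReal.Tendsto.const_mul tendsto_id (by simp) (by simp)
    exact hcont.comp_lowerSemicontinuous hf.lowerSemicontinuous
      fun _ _ h => mul_le_mul_of_nonneg_left h (EReal.coe_nonneg.2 hm)
  convex x y a b ha hb hab := by
    have hm₀ := EReal.coe_nonneg.2 hm
    rw [mul_left_comm (a : EReal), mul_left_comm (b : EReal),
      ← EReal.left_distrib_of_nonneg_of_ne_top hm₀ (EReal.coe_ne_top m)]
    exact mul_le_mul_of_nonneg_left (hf.convex x y a b ha hb hab) hm₀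
  ne_bot x := by simp [EReal.mul_ne_bot, hf.ne_bot x, hm]

lemma sum {ι : Type*} {f : ι → E → EReal} {s : Finset ι}
    (hf : ∀ i ∈ s, IsClosedConvexFn (f i)) : IsClosedConvexFn fun x => ∑ i ∈ s, f i x := by
  rw [← Finset.sum_fn]
  exact Finset.sum_induction f IsClosedConvexFn (fun _ _ => add) zero hf

lemma comp_affineMap {f : F → EReal} (hf : IsClosedConvexFn f) (g : E →ᵃ[ℝ] F)
    (hg : Continuous g) : IsClosedConvexFn fun x => f (g x) where
  lowerSemicontinuous := hf.lowerSemicontinuous.comp hg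
  convex x y a b ha hb hab := by
    rw [Convex.combo_affine_apply hab]
    exact hf.convex (g x) (g y) a b ha hb hab
  ne_bot x := hf.ne_bot (g x)

lemma coe_toReal (hf : IsClosedConvexFn f) {x : E} (hx : f x ≠ ⊤) : ((f x).toReal : EReal) = f x :=
  EReal.coe_toReal hx (hf.ne_bot x)

lemma convexOn_toReal (hf : IsClosedConvexFn f) :
    ConvexOn ℝ {x | f x ≠ ⊤} fun x => (f x).toReal := by
  have hle ⦃x⦄ (hx : f x ≠ ⊤) ⦃y⦄ (hy : f y ≠ ⊤) ⦃a b : ℝ⦄ (ha : 0 ≤ a) (hb : 0 ≤ b)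
      (hab : a + b = 1) :
      f (a • x + b • y) ≤ ((a • (f x).toReal + b • (f y).toReal : ℝ) : EReal) := by
    rw [smul_eq_mul, smul_eq_mul, EReal.coe_add, EReal.coe_mul, EReal.coe_mul,
      hf.coe_toReal hx, hf.coe_toReal hy]
    exact hf.convex x y a b ha hb hab
  refine ⟨fun x hx y hy a b ha hb hab => ?_, fun x hx y hy a b ha hb hab => ?_⟩
  · exact ((hle hx hy ha hb hab).trans_lt (EReal.coe_lt_top _)).ne
  · exact EReal.toReal_le_toReal (hle hx hy ha hb hab) (hf.ne_bot _) (EReal.coe_ne_top _)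

lemma exists_affine_le {φ : ℝ → EReal} (hφ : IsClosedConvexFn φ) :
    ∃ a b : ℝ, ∀ x, ((a * x + b : ℝ) : EReal) ≤ φ x := by
  obtain ⟨a, b, hab⟩ := exists_affine_le_of_convexOn hφ.convexOn_toReal
  refine ⟨a, b, fun x => ?_⟩
  by_cases hx : φ x = ⊤
  · simp [hx]
  · rw [← hφ.coe_toReal hx]
    exact EReal.coe_le_coe_iff.2 (hab x hx)

variable {s : Set E} {h : E → ℝ}

lemma eq_of_isMinOn_coe_add (hf : IsClosedConvexFn f) (hh : StrictConvexOn ℝ s h) {x y : E}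
    (hx : x ∈ s) (hy : y ∈ s) (hfx : f x ≠ ⊤) (hfy : f y ≠ ⊤)
    (hminx : IsMinOn (fun z => (h z : EReal) + f z) s x)
    (hminy : IsMinOn (fun z => (h z : EReal) + f z) s y) : x = y := by
  have hconv : StrictConvexOn ℝ (s ∩ {z | f z ≠ ⊤}) (h + fun z => (f z).toReal) :=
    have hdom := hh.1.inter hf.convexOn_toReal.1
    (hh.subset Set.inter_subset_left hdom).add_convexOn
      (hf.convexOn_toReal.subset Set.inter_subset_right hdom)
  have hcoe {z : E} (hz : f z ≠ ⊤) :
      (h z : EReal) + f z = ((h + fun z => (f z).toReal) z : ℝ) := by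
    simp only [Pi.add_apply, EReal.coe_add, hf.coe_toReal hz]
  have hreal {w : E} (hfw : f w ≠ ⊤) (hmin : IsMinOn (fun z => (h z : EReal) + f z) s w) :
      IsMinOn (h + fun z => (f z).toReal) (s ∩ {z | f z ≠ ⊤}) w := fun z hz => by
    have hwz : (h w : EReal) + f w ≤ h z + f z := hmin hz.1
    rwa [hcoe hfw, hcoe hz.2, EReal.coe_le_coe_iff] at hwz
  exact hconv.eq_of_isMinOn (hreal hfx hminx) (hreal hfy hminy) ⟨hx, hfx⟩ ⟨hy, hfy⟩

theorem existsUnique_isMinOn_coe_add (hf : IsClosedConvexFn f) (hs : IsClosed s)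
    (hlsc : LowerSemicontinuous h) (hconv : StrictConvexOn ℝ s h)
    (hcoer : Tendsto (fun x => (h x : EReal) + f x) (cocompact E ⊓ 𝓟 s) (𝓝 ⊤))
    (hfeas : ∃ x ∈ s, f x ≠ ⊤) :
    ∃! x, x ∈ s ∧ IsMinOn (fun x => (h x : EReal) + f x) s x ∧
      (h x : EReal) + f x ≠ ⊤ ∧ (h x : EReal) + f x ≠ ⊥ := by
  have hfin {x : E} : (h x : EReal) + f x ≠ ⊤ ↔ f x ≠ ⊤ :=
    EReal.add_ne_top_iff_ne_top_right (EReal.coe_ne_bot _) (EReal.coe_ne_top _)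
  obtain ⟨x₀, hx₀, hfx₀⟩ := hfeas
  have hsum : LowerSemicontinuous fun x => (h x : EReal) + f x :=
    (continuous_coe_real_ereal.comp_lowerSemicontinuous hlsc EReal.coe_strictMono.monotone).add'
      hf.lowerSemicontinuous fun _ =>
        EReal.continuousAt_add (.inl (EReal.coe_ne_top _)) (.inl (EReal.coe_ne_bot _))
  obtain ⟨x, hx, hmin⟩ := exists_isMinOn_of_eventually_cocompact_le (hsum.lowerSemicontinuousOn s)
    hs hx₀ ((hcoer.eventually_const_lt (hfin.2 hfx₀).lt_top).mono fun _ => le_of_lt)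
  have hxfin : (h x : EReal) + f x ≠ ⊤ := ((hmin hx₀).trans_lt (hfin.2 hfx₀).lt_top).ne
  refine ⟨x, ⟨hx, hmin, hxfin, EReal.add_ne_bot_iff.2 ⟨EReal.coe_ne_bot _, hf.ne_bot x⟩⟩, ?_⟩
  rintro y ⟨hy, hminy, hyfin, -⟩
  exact hf.eq_of_isMinOn_coe_add hconv hy hx (hfin.1 hyfin) (hfin.1 hxfin) hminy hmin

end IsClosedConvexFn

section Divergence

variable {Z : Type*} [Fintype Z] {φ : ℝ → EReal} {σ : Z → ℝ}

lemma divergence_eq_sum (hσ : ∀ z, 0 < σ z) (ρ : Z → ℝ) :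
    divergence φ ρ σ = ∑ z, (σ z : EReal) * φ (ρ z / σ z) := by
  simp [divergence, hσ, (hσ _).ne']

lemma isClosedConvexFn_divergence (hφ : IsClosedConvexFn φ) (hσ : ∀ z, 0 < σ z) :
    IsClosedConvexFn fun ρ => divergence φ ρ σ := by
  simp only [divergence_eq_sum hσ, div_eq_inv_mul]
  refine .sum fun z _ => ?_
  let density : (Z → ℝ) →ₗ[ℝ] ℝ := (σ z)⁻¹ • LinearMap.proj z
  exact (hφ.comp_affineMap density.toAffineMap ((continuous_apply z).const_smul (σ z)⁻¹)).const_mul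
    (hσ z).le

lemma exists_affine_le_divergence (hφ : IsClosedConvexFn φ) (hσ : ∀ z, 0 < σ z) :
    ∃ a b : ℝ, ∀ ρ : Z → ℝ, ((a * ∑ z, ρ z + b : ℝ) : EReal) ≤ divergence φ ρ σ := by
  obtain ⟨a, b, hab⟩ := hφ.exists_affine_le
  refine ⟨a, b * ∑ z, σ z, fun ρ => ?_⟩
  have hsum : a * ∑ z, ρ z + b * ∑ z, σ z = ∑ z, σ z * (a * (ρ z / σ z) + b) := by
    rw [Finset.mul_sum, Finset.mul_sum, ← Finset.sum_add_distrib]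
    refine Finset.sum_congr rfl fun z _ => ?_
    have := (hσ z).ne'
    field_simp
  rw [hsum, divergence_eq_sum hσ, coe_real_ereal_sum]
  refine Finset.sum_le_sum fun z _ => ?_
  rw [EReal.coe_mul]
  exact mul_le_mul_of_nonneg_left (hab _) (EReal.coe_nonneg.2 (hσ z).le)

lemma divergence_ne_top (hφ : ∀ x, 0 ≤ x → φ x ≠ ⊤) (hσ : ∀ z, 0 < σ z) {ρ : Z → ℝ}
    (hρ : ∀ z, 0 ≤ ρ z) : divergence φ ρ σ ≠ ⊤ := by
  rw [divergence_eq_sum hσ]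
  refine Finset.sum_induction _ (· ≠ ⊤) (fun _ _ => EReal.add_ne_top) EReal.zero_ne_top
    fun z _ => ?_
  simp [EReal.mul_ne_top, hφ _ (div_nonneg (hρ z) (hσ z).le), (hσ z).le]

end Divergence

section EntropicCost

open InformationTheory

-- Fenchel–Young: the convex conjugate of `klFun` is `s ↦ exp s - 1`.
lemma mul_sub_exp_sub_one_le_klFun (s : ℝ) {u : ℝ} (hu : 0 ≤ u) :
    s * u - (Real.exp s - 1) ≤ klFun u := by
  rw [klFun_apply]
  rcases hu.eq_or_lt with rfl | hu
  · simpa using (Real.exp_pos s).le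
  · have hexp := Real.add_one_le_exp (s - Real.log u)
    rw [Real.exp_sub, Real.exp_log hu, le_div_iff₀ hu] at hexp
    linarith

/-- The contribution `c t + ε KL(t | m)` of a single pair of points to the entropic transport cost:
mass `t` is transported at unit cost `c` with reference mass `m`. -/
def entropicCost (c ε m t : ℝ) : ℝ := c * t + ε * (m * klFun (t / m))

variable {ε m : ℝ}

lemma continuous_entropicCost (c ε m : ℝ) : Continuous (entropicCost c ε m) := by
  unfold entropicCost
  have := continuous_klFun
  fun_prop

lemma strictConvexOn_entropicCost (c : ℝ) (hε : 0 < ε) (hm : 0 < m) :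
    StrictConvexOn ℝ (Set.Ici 0) (entropicCost c ε m) := by
  refine ⟨convex_Ici 0, fun x hx y hy hxy a b ha hb hab => ?_⟩
  have hkl : klFun (a * (x / m) + b * (y / m)) < a * klFun (x / m) + b * klFun (y / m) :=
    strictConvexOn_klFun.2 (div_nonneg hx hm.le) (div_nonneg hy hm.le)
      (fun h => hxy ((div_left_inj' hm.ne').1 h)) ha hb hab
  have hmul := mul_lt_mul_of_pos_left hkl (mul_pos hε hm)
  have harg : (a * x + b * y) / m = a * (x / m) + b * (y / m) := by ring
  simp only [entropicCost, smul_eq_mul, harg]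
  linarith

lemma exists_mul_sub_le_entropicCost (c : ℝ) (hε : 0 < ε) (hm : 0 < m) (a : ℝ) :
    ∃ C : ℝ, ∀ t, 0 ≤ t → a * t - C ≤ entropicCost c ε m t := by
  set s := (a - c) / ε
  refine ⟨ε * m * (Real.exp s - 1), fun t ht => ?_⟩
  calc a * t - ε * m * (Real.exp s - 1)
      = c * t + ε * (m * (s * (t / m) - (Real.exp s - 1))) := by
        simp only [s]; field_simp; ring
    _ ≤ entropicCost c ε m t := by
        unfold entropicCost
        gcongr
        exact mul_sub_exp_sub_one_le_klFun s (div_nonneg ht hm.le)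

lemma KLfin_eq_sum_klFun {Z : Type*} [Fintype Z] {σ : Z → ℝ} (hσ : ∀ z, 0 < σ z) (ρ : Z → ℝ) :
    KLfin ρ σ = ((∑ z, σ z * klFun (ρ z / σ z) : ℝ) : EReal) := by
  rw [KLfin, if_pos fun z hz => absurd hz (hσ z).ne']
  congr 1
  refine Finset.sum_congr rfl fun z _ => ?_
  have := (hσ z).ne'
  rw [klFun_apply]
  field_simp
  ring

end EntropicCost

section CellProblem

variable {X Y : Type*} [Fintype X] [Fintype Y] {μ : X → ℝ} {ν : Y → ℝ} {ε : ℝ}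
  {φ₁ φ₂ : ℝ → EReal}

/-- The first marginal `P_X π` of a plan `π`. -/
def fstMarginal : (X → Y → ℝ) →ₗ[ℝ] X → ℝ where
  toFun π x := ∑ y, π x y
  map_add' π π' := funext fun x => by simp [Finset.sum_add_distrib]
  map_smul' a π := funext fun x => by simp [Finset.mul_sum]

/-- The second marginal `P_Y π` of a plan `π`. -/
def sndMarginal : (X → Y → ℝ) →ₗ[ℝ] Y → ℝ where
  toFun π y := ∑ x, π x y
  map_add' π π' := funext fun y => by simp [Finset.sum_add_distrib]
  map_smul' a π := funext fun y => by simp [Finset.mul_sum]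

/-- The entropic transport cost `⟨c, π⟩ + ε KL(π | μ ⊗ ν)` of a plan `π`. -/
def planCost (c : X → Y → ℝ) (ε : ℝ) (μ : X → ℝ) (ν : Y → ℝ) (π : X → Y → ℝ) : ℝ :=
  ∑ x, ∑ y, entropicCost (c x y) ε (μ x * ν y) (π x y)

/-- The soft marginal constraints `D_{φ₁}(P_X π | μ) + D_{φ₂}(P_Y π + νm | ν)`. -/
def marginalPenalty (φ₁ φ₂ : ℝ → EReal) (μ : X → ℝ) (ν νm : Y → ℝ) (π : X → Y → ℝ) : EReal :=
  divergence φ₁ (fstMarginal π) μ + divergence φ₂ (sndMarginal π + νm) ν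

lemma EJfun_eq_planCost_add_marginalPenalty (hμ : ∀ x, 0 < μ x) (hν : ∀ y, 0 < ν y)
    (c : X → Y → ℝ) (ε : ℝ) (φ₁ φ₂ : ℝ → EReal) (νm : Y → ℝ) (π : X → Y → ℝ) :
    EJfun c ε φ₁ φ₂ μ ν νm π = planCost c ε μ ν π + marginalPenalty φ₁ φ₂ μ ν νm π := by
  have hcost : ((∑ x, ∑ y, c x y * π x y : ℝ) : EReal)
      + (ε : EReal) * KLfin (fun p : X × Y => π p.1 p.2) (fun p : X × Y => μ p.1 * ν p.2)
      = planCost c ε μ ν π := by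
    rw [KLfin_eq_sum_klFun fun p : X × Y => mul_pos (hμ p.1) (hν p.2), ← EReal.coe_mul,
      ← EReal.coe_add, Fintype.sum_prod_type]
    simp only [planCost, entropicCost, Finset.mul_sum, Finset.sum_add_distrib]
  rw [EJfun, hcost, add_assoc]
  rfl

lemma continuous_planCost (c : X → Y → ℝ) (ε : ℝ) (μ : X → ℝ) (ν : Y → ℝ) :
    Continuous (planCost c ε μ ν) :=
  continuous_finsetSum _ fun x _ => continuous_finsetSum _ fun y _ =>
    (continuous_entropicCost _ _ _).comp (by fun_prop)

lemma strictConvexOn_planCost (hμ : ∀ x, 0 < μ x) (hν : ∀ y, 0 < ν y) (c : X → Y → ℝ)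
    (hε : 0 < ε) : StrictConvexOn ℝ (Set.Ici 0) (planCost c ε μ ν) := by
  have hpi : Set.Ici (0 : X → Y → ℝ) = Set.univ.pi fun _ => Set.univ.pi fun _ => Set.Ici 0 := by
    simp only [Set.pi_univ_Ici]; rfl
  rw [hpi]
  exact strictConvexOn_sum_pi fun x => strictConvexOn_sum_pi fun y =>
    strictConvexOn_entropicCost (c x y) hε (mul_pos (hμ x) (hν y))

lemma exists_mul_sub_le_planCost (hμ : ∀ x, 0 < μ x) (hν : ∀ y, 0 < ν y) (c : X → Y → ℝ)
    (hε : 0 < ε) (a : ℝ) :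
    ∃ C : ℝ, ∀ π : X → Y → ℝ, 0 ≤ π → a * ∑ x, ∑ y, π x y - C ≤ planCost c ε μ ν π := by
  choose C hC using fun x y =>
    exists_mul_sub_le_entropicCost (c x y) hε (mul_pos (hμ x) (hν y)) a
  refine ⟨∑ x, ∑ y, C x y, fun π hπ => ?_⟩
  simp only [Finset.mul_sum, ← Finset.sum_sub_distrib]
  exact Finset.sum_le_sum fun x _ => Finset.sum_le_sum fun y _ => hC x y _ (hπ x y)

lemma isClosedConvexFn_marginalPenalty (hμ : ∀ x, 0 < μ x) (hν : ∀ y, 0 < ν y)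
    (h₁ : IsClosedConvexFn φ₁) (h₂ : IsClosedConvexFn φ₂) (νm : Y → ℝ) :
    IsClosedConvexFn (marginalPenalty φ₁ φ₂ μ ν νm) := by
  have hfst : IsClosedConvexFn fun π : X → Y → ℝ => divergence φ₁ (fstMarginal π) μ :=
    (isClosedConvexFn_divergence h₁ hμ).comp_affineMap fstMarginal.toAffineMap
      fstMarginal.continuous_of_finiteDimensional
  let shiftedMarginal : (X → Y → ℝ) →ᵃ[ℝ] Y → ℝ :=
    sndMarginal.toAffineMap + AffineMap.const ℝ (X → Y → ℝ) νm
  have hsnd : IsClosedConvexFn fun π : X → Y → ℝ => divergence φ₂ (sndMarginal π + νm) ν :=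
    (isClosedConvexFn_divergence h₂ hν).comp_affineMap shiftedMarginal
      (sndMarginal.continuous_of_finiteDimensional.add continuous_const)
  exact hfst.add hsnd

lemma exists_affine_le_marginalPenalty (hμ : ∀ x, 0 < μ x) (hν : ∀ y, 0 < ν y)
    (h₁ : IsClosedConvexFn φ₁) (h₂ : IsClosedConvexFn φ₂) (νm : Y → ℝ) :
    ∃ a b : ℝ, ∀ π : X → Y → ℝ,
      ((a * ∑ x, ∑ y, π x y + b : ℝ) : EReal) ≤ marginalPenalty φ₁ φ₂ μ ν νm π := by
  obtain ⟨a₁, b₁, hle₁⟩ := exists_affine_le_divergence h₁ hμ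
  obtain ⟨a₂, b₂, hle₂⟩ := exists_affine_le_divergence h₂ hν
  refine ⟨a₁ + a₂, b₁ + a₂ * ∑ y, νm y + b₂, fun π => ?_⟩
  have hfst : ∑ x, fstMarginal π x = ∑ x, ∑ y, π x y := rfl
  have hsnd : ∑ y, (sndMarginal π + νm) y = ∑ x, ∑ y, π x y + ∑ y, νm y := by
    rw [Finset.sum_comm, ← Finset.sum_add_distrib]; rfl
  refine le_trans (le_of_eq ?_) (add_le_add (hle₁ (fstMarginal π)) (hle₂ (sndMarginal π + νm)))
  rw [hfst, hsnd, ← EReal.coe_add]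
  congr 1
  ring

lemma norm_le_sum_sum_of_nonneg {π : X → Y → ℝ} (hπ : 0 ≤ π) : ‖π‖ ≤ ∑ x, ∑ y, π x y := by
  have hrow (x : X) : 0 ≤ ∑ y, π x y := Finset.sum_nonneg fun y _ => hπ x y
  have htotal : 0 ≤ ∑ x, ∑ y, π x y := Finset.sum_nonneg fun x _ => hrow x
  refine (pi_norm_le_iff_of_nonneg htotal).2 fun x =>
    (pi_norm_le_iff_of_nonneg htotal).2 fun y => ?_
  calc ‖π x y‖ = π x y := Real.norm_of_nonneg (hπ x y)
    _ ≤ ∑ y, π x y := Finset.single_le_sum (fun y _ => hπ x y) (Finset.mem_univ y)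
    _ ≤ ∑ x, ∑ y, π x y := Finset.single_le_sum (fun x _ => hrow x) (Finset.mem_univ x)

lemma tendsto_planCost_add_marginalPenalty (hμ : ∀ x, 0 < μ x) (hν : ∀ y, 0 < ν y)
    (c : X → Y → ℝ) (hε : 0 < ε) (h₁ : IsClosedConvexFn φ₁) (h₂ : IsClosedConvexFn φ₂)
    (νm : Y → ℝ) :
    Tendsto (fun π => (planCost c ε μ ν π : EReal) + marginalPenalty φ₁ φ₂ μ ν νm π)
      (cocompact (X → Y → ℝ) ⊓ 𝓟 (Set.Ici 0)) (𝓝 ⊤) := by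
  obtain ⟨a, b, hpen⟩ := exists_affine_le_marginalPenalty hμ hν h₁ h₂ νm
  -- The slope `1 - a` absorbs the linear lower bound on the penalty and leaves the total mass.
  obtain ⟨C, hcost⟩ := exists_mul_sub_le_planCost hμ hν c hε (1 - a)
  have hlow (π : X → Y → ℝ) (hπ : 0 ≤ π) : ((‖π‖ + (b - C) : ℝ) : EReal) ≤
      (planCost c ε μ ν π : EReal) + marginalPenalty φ₁ φ₂ μ ν νm π :=
    calc ((‖π‖ + (b - C) : ℝ) : EReal)
        ≤ (((1 - a) * ∑ x, ∑ y, π x y - C : ℝ) : EReal) + (a * ∑ x, ∑ y, π x y + b : ℝ) := by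
          rw [← EReal.coe_add, EReal.coe_le_coe_iff]
          linarith [norm_le_sum_sum_of_nonneg hπ]
      _ ≤ _ := add_le_add (EReal.coe_le_coe_iff.2 (hcost π hπ)) (hpen π)
  have hnorm : Tendsto (fun π : X → Y → ℝ => ((‖π‖ + (b - C) : ℝ) : EReal))
      (cocompact (X → Y → ℝ)) (𝓝 ⊤) :=
    EReal.tendsto_coe_atTop.comp
      (tendsto_atTop_add_const_right _ _ tendsto_norm_cocompact_atTop)
  exact tendsto_nhds_top_mono (hnorm.mono_left inf_le_left)
    (eventually_inf_principal.2 (Eventually.of_forall hlow))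

lemma EJfun_ne_top (hμ : ∀ x, 0 < μ x) (hν : ∀ y, 0 < ν y) (c : X → Y → ℝ) (ε : ℝ)
    (h₁ : ∀ t, 0 ≤ t → φ₁ t ≠ ⊤) (h₂ : ∀ t, 0 ≤ t → φ₂ t ≠ ⊤) {νm : Y → ℝ} (hνm : ∀ y, 0 ≤ νm y)
    {π : X → Y → ℝ} (hπ : ∀ x y, 0 ≤ π x y) : EJfun c ε φ₁ φ₂ μ ν νm π ≠ ⊤ := by
  rw [EJfun_eq_planCost_add_marginalPenalty hμ hν]
  refine EReal.add_ne_top (EReal.coe_ne_top _) (EReal.add_ne_top ?_ ?_)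
  · exact divergence_ne_top h₁ hμ fun x => Finset.sum_nonneg fun y _ => hπ x y
  · exact divergence_ne_top h₂ hν fun y =>
      add_nonneg (Finset.sum_nonneg fun x _ => hπ x y) (hνm y)

theorem cell_subproblem_exists_unique_minimizer_general
    (μ : X → ℝ) (ν : Y → ℝ) (hμ : ∀ x, 0 < μ x) (hν : ∀ y, 0 < ν y)
    (c : X → Y → ℝ) (ε : ℝ) (hε : 0 < ε)
    (φ₁ φ₂ : ℝ → EReal) (h₁ : IsClosedConvexFn φ₁) (h₂ : IsClosedConvexFn φ₂) (νm : Y → ℝ)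
    (hfeas : ∃ π : X → Y → ℝ, (∀ x y, 0 ≤ π x y) ∧ EJfun c ε φ₁ φ₂ μ ν νm π ≠ ⊤) :
    ∃! πJ : X → Y → ℝ,
      (∀ x y, 0 ≤ πJ x y) ∧
      (∀ π : X → Y → ℝ, (∀ x y, 0 ≤ π x y) →
        EJfun c ε φ₁ φ₂ μ ν νm πJ ≤ EJfun c ε φ₁ φ₂ μ ν νm π) ∧
      EJfun c ε φ₁ φ₂ μ ν νm πJ ≠ ⊤ ∧ EJfun c ε φ₁ φ₂ μ ν νm πJ ≠ ⊥ := by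
  simp only [EJfun_eq_planCost_add_marginalPenalty hμ hν] at hfeas ⊢
  obtain ⟨π₀, hπ₀, hfin⟩ := hfeas
  have hpen : marginalPenalty φ₁ φ₂ μ ν νm π₀ ≠ ⊤ := fun h =>
    hfin (by rw [h, EReal.coe_add_top])
  exact (isClosedConvexFn_marginalPenalty hμ hν h₁ h₂ νm).existsUnique_isMinOn_coe_add isClosed_Ici
    (continuous_planCost c ε μ ν).lowerSemicontinuous (strictConvexOn_planCost hμ hν c hε)
    (tendsto_planCost_add_marginalPenalty hμ hν c hε h₁ h₂ νm) ⟨π₀, hπ₀, hpen⟩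

end CellProblem

/-- the unbalanced cell subproblem has a finite infimum, attained
by a unique minimizer. -/
theorem cell_subproblem_exists_unique_minimizer
    {X Y : Type*} [Fintype X] [Fintype Y] [Nonempty X] [Nonempty Y]
    (μ : X → ℝ) (ν : Y → ℝ) (hμ : ∀ x, 0 < μ x) (hν : ∀ y, 0 < ν y)
    (c : X → Y → ℝ) (ε : ℝ) (hε : 0 < ε)
    (φ₁ φ₂ : ℝ → EReal) (h₁ : AssumptionA φ₁) (h₂ : AssumptionA φ₂)
    (νm : Y → ℝ) (hνm : ∀ y, 0 ≤ νm y) :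
    ∃! πJ : X → Y → ℝ,
      (∀ x y, 0 ≤ πJ x y) ∧
      (∀ π : X → Y → ℝ, (∀ x y, 0 ≤ π x y) →
        EJfun c ε φ₁ φ₂ μ ν νm πJ ≤ EJfun c ε φ₁ φ₂ μ ν νm π) ∧
      EJfun c ε φ₁ φ₂ μ ν νm πJ ≠ ⊤ ∧ EJfun c ε φ₁ φ₂ μ ν νm πJ ≠ ⊥ :=
  cell_subproblem_exists_unique_minimizer_general μ ν hμ hν c ε hε φ₁ φ₂ h₁.1.isClosedConvexFn
    h₂.1.isClosedConvexFn νm ⟨0, fun _ _ => le_rfl,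
      EJfun_ne_top hμ hν c ε h₁.2.2.1 h₂.2.2.1 hνm fun _ _ => le_rfl⟩

end
end

section
/- Let X_J, Y, μ_J, ν, c, ε, φ₁, φ₂ (satisfying Assumption A), D₁, D₂ be as in the unbalanced cell subproblem, and let M ≥ 0. Then there exists a constant C < ∞, depending only on μ_J, ν, c, ε, φ₁, φ₂ and M (but not on ν_{-J}), such that for every ν_{-J}: Y → ℝ≥0 with 0 ≤ ν_{-J}(y) ≤ M·ν(y) for all y, the unique maximizer (α_J, β_J) of the dual objective D_J(·,·|ν_{-J}) satisfies max_{x} |α_J(x)| ≤ C and max_{y} |β_J(y)| ≤ C. -/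
open Filter Topology
open scoped Classical

noncomputable section

/-! A point `t > 0` at which `φ` is finite makes `φ*(z)` grow at least like `t z⁺`. In `D_J` this
penalises `α⁻` through `φ₁*(-α)` and `β⁻` through `φ₂*(-β)`; for the latter a point `s > M` is
needed, since `-β ν_{-J}` may recover as much as `M ν β⁻`. The exponential term in turn penalises
`α + β` from above. Finiteness at `0` bounds `φ*` from below, so none of these penalties can be
paid for elsewhere: on a superlevel set of `D_J` each of them is bounded, independently of `ν_{-J}`.
A maximizer lies in the superlevel set of the value at `(0, 0)`, where `ν_{-J}` does not enter. -/

section Conjugate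

variable {φ : ℝ → EReal}

theorem le_conjFn_of_le {r x : ℝ} (hr : φ x ≤ r) (z : ℝ) :
    ((z * x - r : ℝ) : EReal) ≤ conjFn φ z := by
  rw [EReal.coe_sub]
  exact (EReal.sub_le_sub le_rfl hr).trans
    (le_iSup (fun x : ℝ => ((z * x : ℝ) : EReal) - φ x) x)

theorem mul_posPart_sub_le_conjFn {p t : ℝ} (h0 : φ 0 ≤ p) (ht : φ t ≤ p) (z : ℝ) :
    ((t * z⁺ - p : ℝ) : EReal) ≤ conjFn φ z := by
  rcases le_total z 0 with hz | hz
  · simpa only [posPart_eq_zero.2 hz, mul_zero] using le_conjFn_of_le h0 z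
  · simpa only [posPart_eq_self.2 hz, mul_comm t z] using le_conjFn_of_le ht z

theorem conjFn_zero_nonpos (hφ : ∀ x, 0 ≤ φ x) : conjFn φ 0 ≤ 0 :=
  iSup_le fun x => by simpa using hφ x

end Conjugate

theorem exists_coe_ge_and_coe_ge {a b : EReal} (ha : a ≠ ⊤) (hb : b ≠ ⊤) :
    ∃ p : ℝ, a ≤ p ∧ b ≤ p :=
  ⟨max a.toReal b.toReal,
    (EReal.le_coe_toReal ha).trans (EReal.coe_le_coe_iff.2 (le_max_left _ _)),
    (EReal.le_coe_toReal hb).trans (EReal.coe_le_coe_iff.2 (le_max_right _ _))⟩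

section FiniteSums

variable {ι : Type*} [Fintype ι] {w : ι → ℝ}

theorem coe_sum_mul_le_sum_coe_mul (hw : ∀ i, 0 ≤ w i) {f : ι → ℝ} {g : ι → EReal}
    (hfg : ∀ i, (f i : EReal) ≤ g i) :
    ((∑ i, w i * f i : ℝ) : EReal) ≤ ∑ i, (w i : EReal) * g i := by
  refine Finset.sum_hom_rel (r := fun (a : ℝ) (b : EReal) => (a : EReal) ≤ b)
    EReal.coe_zero.le fun i a b hab => ?_
  rw [EReal.coe_add, EReal.coe_mul]
  exact add_le_add (mul_le_mul_of_nonneg_left (hfg i) (EReal.coe_nonneg.2 (hw i))) hab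

theorem sum_coe_mul_nonpos (hw : ∀ i, 0 ≤ w i) {g : ι → EReal} (hg : ∀ i, g i ≤ 0) :
    ∑ i, (w i : EReal) * g i ≤ 0 :=
  Finset.sum_nonpos fun i _ =>
    (mul_le_mul_of_nonneg_left (hg i) (EReal.coe_nonneg.2 (hw i))).trans_eq (mul_zero _)

theorem le_div_of_sum_mul_le (hw : ∀ i, 0 < w i) {g : ι → ℝ} (hg : ∀ i, 0 ≤ g i) {S : ℝ}
    (hS : ∑ i, w i * g i ≤ S) (i : ι) : g i ≤ S / w i := by
  rw [le_div_iff₀' (hw i)]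
  exact (Finset.single_le_sum (fun j _ => mul_nonneg (hw j).le (hg j)) (Finset.mem_univ i)).trans hS

theorem neg_sum_mul_le_sum_mul_negPart {M : ℝ} {v : ι → ℝ} (hv : ∀ i, 0 ≤ v i)
    (hvM : ∀ i, v i ≤ M * w i) (b : ι → ℝ) :
    -∑ i, b i * v i ≤ ∑ i, w i * (M * (b i)⁻) := by
  rw [← Finset.sum_neg_distrib]
  refine Finset.sum_le_sum fun i _ => ?_
  calc -(b i * v i) = -b i * v i := (neg_mul _ _).symm
    _ ≤ (b i)⁻ * v i := mul_le_mul_of_nonneg_right (neg_le_negPart _) (hv i)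
    _ ≤ (b i)⁻ * (M * w i) := mul_le_mul_of_nonneg_left (hvM i) (negPart_nonneg _)
    _ = w i * (M * (b i)⁻) := by ring

end FiniteSums

theorem le_mul_exp_div {ε : ℝ} (hε : 0 < ε) (u : ℝ) : u ≤ ε * Real.exp (u / ε) := by
  rw [← div_le_iff₀' hε]
  exact (lt_add_one _).le.trans (Real.add_one_le_exp _)

theorem abs_le_two_mul_of_negPart_le_of_add_le {X Y : Type*} [Nonempty X] [Nonempty Y]
    {α : X → ℝ} {β : Y → ℝ} {R : ℝ} (hα : ∀ x, (α x)⁻ ≤ R) (hβ : ∀ y, (β y)⁻ ≤ R)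
    (hαβ : ∀ x y, α x + β y ≤ R) :
    (∀ x, |α x| ≤ 2 * R) ∧ (∀ y, |β y| ≤ 2 * R) := by
  obtain ⟨x₀⟩ := ‹Nonempty X›
  obtain ⟨y₀⟩ := ‹Nonempty Y›
  have hR : 0 ≤ R := (negPart_nonneg _).trans (hα x₀)
  have neg_α_le x : -α x ≤ R := (neg_le_negPart _).trans (hα x)
  have neg_β_le y : -β y ≤ R := (neg_le_negPart _).trans (hβ y)
  exact ⟨fun x => abs_le'.2 ⟨by linarith [hαβ x y₀, neg_β_le y₀], by linarith [neg_α_le x]⟩,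
    fun y => abs_le'.2 ⟨by linarith [hαβ x₀ y, neg_α_le x₀], by linarith [neg_β_le y]⟩⟩

section DualObjective

variable {X Y : Type*} [Fintype X] [Fintype Y] {μ : X → ℝ} {ν νm : Y → ℝ} {c : X → Y → ℝ}
  {ε : ℝ} {φ₁ φ₂ : ℝ → EReal} {α : X → ℝ} {β : Y → ℝ} {M p q s t d : ℝ}

theorem coe_le_DJfun_zero_zero (hμ : ∀ x, 0 ≤ μ x) (hν : ∀ y, 0 ≤ ν y)
    (h₁ : conjFn φ₁ 0 ≤ 0) (h₂ : conjFn φ₂ 0 ≤ 0) :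
    ((ε * ∑ x, ∑ y, (1 - Real.exp (-c x y / ε)) * (μ x * ν y) : ℝ) : EReal) ≤
      DJfun c ε φ₁ φ₂ μ ν νm 0 0 := by
  have hX := sum_coe_mul_nonpos hμ fun _ => h₁
  have hY := sum_coe_mul_nonpos hν fun _ => h₂
  simpa [DJfun] using EReal.sub_le_sub (EReal.sub_le_sub le_rfl hX) hY

theorem DJfun_le_coe (hμ : ∀ x, 0 ≤ μ x) (hν : ∀ y, 0 ≤ ν y)
    (h₁0 : φ₁ 0 ≤ p) (h₁t : φ₁ t ≤ p) (h₂0 : φ₂ 0 ≤ q) (h₂s : φ₂ s ≤ q) :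
    DJfun c ε φ₁ φ₂ μ ν νm α β ≤
      ((ε * ∑ x, ∑ y, (1 - Real.exp ((α x + β y - c x y) / ε)) * (μ x * ν y)
        - ∑ x, μ x * (t * (α x)⁻ - p) - ∑ y, ν y * (s * (β y)⁻ - q) - ∑ y, β y * νm y : ℝ) :
          EReal) := by
  have conj₁ x : ((t * (α x)⁻ - p : ℝ) : EReal) ≤ conjFn φ₁ (-α x) :=
    posPart_neg (α x) ▸ mul_posPart_sub_le_conjFn h₁0 h₁t (-α x)
  have conj₂ y : ((s * (β y)⁻ - q : ℝ) : EReal) ≤ conjFn φ₂ (-β y) :=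
    posPart_neg (β y) ▸ mul_posPart_sub_le_conjFn h₂0 h₂s (-β y)
  rw [EReal.coe_sub, EReal.coe_sub, EReal.coe_sub]
  exact EReal.sub_le_sub (EReal.sub_le_sub (EReal.sub_le_sub le_rfl
    (coe_sum_mul_le_sum_coe_mul hμ conj₁)) (coe_sum_mul_le_sum_coe_mul hν conj₂)) le_rfl

theorem penalties_le_of_le_DJfun (hμ : ∀ x, 0 ≤ μ x) (hν : ∀ y, 0 ≤ ν y)
    (h₁0 : φ₁ 0 ≤ p) (h₁t : φ₁ t ≤ p) (h₂0 : φ₂ 0 ≤ q) (h₂s : φ₂ s ≤ q)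
    (hνm : ∀ y, 0 ≤ νm y) (hνmM : ∀ y, νm y ≤ M * ν y)
    (hd : (d : EReal) ≤ DJfun c ε φ₁ φ₂ μ ν νm α β) :
    ∑ x, μ x * (t * (α x)⁻) + ∑ y, ν y * ((s - M) * (β y)⁻)
        + ∑ x, ∑ y, μ x * ν y * (ε * Real.exp ((α x + β y - c x y) / ε)) ≤
      ε * ∑ x, ∑ y, μ x * ν y + p * ∑ x, μ x + q * ∑ y, ν y - d := by
  have hreal := EReal.coe_le_coe_iff.1 (hd.trans (DJfun_le_coe hμ hν h₁0 h₁t h₂0 h₂s))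
  have hcross := neg_sum_mul_le_sum_mul_negPart hνm hνmM β
  have hexp : ε * ∑ x, ∑ y, (1 - Real.exp ((α x + β y - c x y) / ε)) * (μ x * ν y) =
      ε * ∑ x, ∑ y, μ x * ν y
        - ∑ x, ∑ y, μ x * ν y * (ε * Real.exp ((α x + β y - c x y) / ε)) := by
    simp only [Finset.mul_sum, ← Finset.sum_sub_distrib]
    exact Finset.sum_congr rfl fun x _ => Finset.sum_congr rfl fun y _ => by ring
  have hX : ∑ x, μ x * (t * (α x)⁻ - p) = ∑ x, μ x * (t * (α x)⁻) - p * ∑ x, μ x := by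
    simp only [mul_sub, Finset.sum_sub_distrib, ← Finset.sum_mul, mul_comm p]
  have hY : ∑ y, ν y * (s * (β y)⁻ - q) =
      ∑ y, ν y * ((s - M) * (β y)⁻) + ∑ y, ν y * (M * (β y)⁻) - q * ∑ y, ν y := by
    rw [← Finset.sum_add_distrib, Finset.mul_sum, ← Finset.sum_sub_distrib]
    exact Finset.sum_congr rfl fun y _ => by ring
  linarith

theorem pointwise_bounds_of_penalties_le {S δ : ℝ} (hμ : ∀ x, 0 < μ x) (hν : ∀ y, 0 < ν y)
    (hε : 0 < ε) (ht : 0 < t) (hδ : 0 < δ)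
    (hS : ∑ x, μ x * (t * (α x)⁻) + ∑ y, ν y * (δ * (β y)⁻)
      + ∑ x, ∑ y, μ x * ν y * (ε * Real.exp ((α x + β y - c x y) / ε)) ≤ S) :
    (∀ x, (α x)⁻ ≤ S / μ x / t) ∧ (∀ y, (β y)⁻ ≤ S / ν y / δ) ∧
      ∀ x y, α x + β y ≤ c x y + S / (μ x * ν y) := by
  have hα x : 0 ≤ t * (α x)⁻ := mul_nonneg ht.le (negPart_nonneg _)
  have hβ y : 0 ≤ δ * (β y)⁻ := mul_nonneg hδ.le (negPart_nonneg _)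
  have hμν (z : X × Y) : 0 < μ z.1 * ν z.2 := mul_pos (hμ z.1) (hν z.2)
  have hexp (z : X × Y) : 0 ≤ ε * Real.exp ((α z.1 + β z.2 - c z.1 z.2) / ε) := by positivity
  rw [← Fintype.sum_prod_type'
    (fun x y => μ x * ν y * (ε * Real.exp ((α x + β y - c x y) / ε)))] at hS
  have hX := Finset.sum_nonneg fun x (_ : x ∈ Finset.univ) => mul_nonneg (hμ x).le (hα x)
  have hY := Finset.sum_nonneg fun y (_ : y ∈ Finset.univ) => mul_nonneg (hν y).le (hβ y)
  have hXY := Finset.sum_nonneg fun z (_ : z ∈ Finset.univ) => mul_nonneg (hμν z).le (hexp z)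
  have hmarginals := (le_add_of_nonneg_right hXY).trans hS
  refine ⟨fun x => ?_, fun y => ?_, fun x y => ?_⟩
  · rw [le_div_iff₀' ht]
    exact le_div_of_sum_mul_le hμ hα ((le_add_of_nonneg_right hY).trans hmarginals) x
  · rw [le_div_iff₀' hδ]
    exact le_div_of_sum_mul_le hν hβ ((le_add_of_nonneg_left hX).trans hmarginals) y
  · have hle := le_div_of_sum_mul_le hμν hexp
      ((le_add_of_nonneg_left (add_nonneg hX hY)).trans hS) (x, y)
    exact sub_le_iff_le_add'.1 ((le_mul_exp_div hε _).trans hle)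

theorem dual_maximizers_uniformly_bounded_general [Nonempty X] [Nonempty Y]
    (hμ : ∀ x, 0 < μ x) (hν : ∀ y, 0 < ν y) (c : X → Y → ℝ) (hε : 0 < ε)
    (h₁0 : φ₁ 0 ≠ ⊤) (ht : 0 < t) (h₁t : φ₁ t ≠ ⊤)
    (h₂0 : φ₂ 0 ≠ ⊤) (hs : M < s) (h₂s : φ₂ s ≠ ⊤) (d : ℝ) :
    ∃ C : ℝ, ∀ νm : Y → ℝ, (∀ y, 0 ≤ νm y) → (∀ y, νm y ≤ M * ν y) →
      ∀ (α : X → ℝ) (β : Y → ℝ), (d : EReal) ≤ DJfun c ε φ₁ φ₂ μ ν νm α β →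
        (∀ x, |α x| ≤ C) ∧ (∀ y, |β y| ≤ C) := by
  obtain ⟨p, h₁0p, h₁tp⟩ := exists_coe_ge_and_coe_ge h₁0 h₁t
  obtain ⟨q, h₂0q, h₂sq⟩ := exists_coe_ge_and_coe_ge h₂0 h₂s
  let S := ε * ∑ x, ∑ y, μ x * ν y + p * ∑ x, μ x + q * ∑ y, ν y - d
  obtain ⟨A, hA⟩ := Finite.exists_le fun x => S / μ x / t
  obtain ⟨B, hB⟩ := Finite.exists_le fun y => S / ν y / (s - M)
  obtain ⟨K, hK⟩ := Finite.exists_le fun z : X × Y => c z.1 z.2 + S / (μ z.1 * ν z.2)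
  refine ⟨2 * max A (max B K), fun νm hνm hνmM α β hd => ?_⟩
  obtain ⟨hα, hβ, hαβ⟩ := pointwise_bounds_of_penalties_le hμ hν hε ht (sub_pos.2 hs)
    (penalties_le_of_le_DJfun (fun x => (hμ x).le) (fun y => (hν y).le)
      h₁0p h₁tp h₂0q h₂sq hνm hνmM hd)
  exact abs_le_two_mul_of_negPart_le_of_add_le
    (fun x => ((hα x).trans (hA x)).trans (le_max_left _ _))
    (fun y => ((hβ y).trans (hB y)).trans ((le_max_left _ _).trans (le_max_right _ _)))
    fun x y => ((hαβ x y).trans (hK (x, y))).trans ((le_max_right _ _).trans (le_max_right _ _))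

end DualObjective

/-- uniform bound on the dual maximizers, depending only on
`μ, ν, c, ε, φ₁, φ₂, M` but not on the `Y`-submarginal `ν_{-J}` with
`0 ≤ ν_{-J} ≤ M·ν`. -/
theorem dual_maximizers_uniformly_bounded
    {X Y : Type*} [Fintype X] [Fintype Y] [Nonempty X] [Nonempty Y]
    (μ : X → ℝ) (ν : Y → ℝ) (hμ : ∀ x, 0 < μ x) (hν : ∀ y, 0 < ν y)
    (c : X → Y → ℝ) (ε : ℝ) (hε : 0 < ε)
    (φ₁ φ₂ : ℝ → EReal) (h₁ : AssumptionA φ₁) (h₂ : AssumptionA φ₂)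
    (M : ℝ) (hM : 0 ≤ M) :
    ∃ C : ℝ, ∀ νm : Y → ℝ, (∀ y, 0 ≤ νm y) → (∀ y, νm y ≤ M * ν y) →
      ∀ (α : X → ℝ) (β : Y → ℝ),
        (∀ (α' : X → ℝ) (β' : Y → ℝ),
            DJfun c ε φ₁ φ₂ μ ν νm α' β' ≤ DJfun c ε φ₁ φ₂ μ ν νm α β) →
        (∀ x, |α x| ≤ C) ∧ (∀ y, |β y| ≤ C) := by
  obtain ⟨C, hC⟩ := dual_maximizers_uniformly_bounded_general hμ hν c hε
    (h₁.2.2.1 0 le_rfl) one_pos (h₁.2.2.1 1 zero_le_one)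
    (h₂.2.2.1 0 le_rfl) (lt_add_one M) (h₂.2.2.1 (M + 1) (by linarith)) _
  exact ⟨C, fun νm hνm hνmM α β hmax => hC νm hνm hνmM α β <|
    (coe_le_DJfun_zero_zero (fun x => (hμ x).le) (fun y => (hν y).le)
      (conjFn_zero_nonpos h₁.2.1) (conjFn_zero_nonpos h₂.2.1)).trans (hmax 0 0)⟩

end
end
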